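/- There exist W₀ and constants K, c > 0, independent of W, such that for all W ≥ W₀, all cubes Λ of side W in ℤ³, and all E ∈ 𝓘: (i) if 0 < f_a ≤ 3/4 and μ_{C_{f_a}} is the centered Gaussian measure on ℝ^Λ with covariance C_{f_a} = (C⁻¹ − f_a m_r²·Id)⁻¹, then μ_{C_{f_a}}({a : ∃ j ∈ Λ with |a_j| > W^{−1/8}}) ≤ K W³ e^{−c W^{7/4}}; (ii) if f_b = 1 − W^{−3} and μ_{C_{f_b}} is the centered Gaussian measure on ℝ^Λ with covariance C_{f_b} = (C⁻¹ − f_b m_r²·Id)⁻¹, then μ_{C_{f_b}}({b : ∃ j, j' ∈ Λ with |b_j − b_{j'}| > W^{−1/8}}) ≤ K W⁶ e^{−c W^{7/4}}. -/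

import Mathlib

open scoped BigOperators Topology
open Matrix MeasureTheory Filter

noncomputable section

/-- The discrete torus of side lengths `L i`; when each `L i` is a positive multiple of `W`,
this is a union of cubes of side `W` (containing `0`) with periodic boundary conditions. -/
abbrev Torus (L : Fin 3 → ℕ) := (i : Fin 3) → ZMod (L i)

/-- Unit lattice vector in direction `i`. -/
def unitVec (L : Fin 3 → ℕ) (i : Fin 3) : Torus L := fun j => if j = i then 1 else 0

/-- Discrete Laplacian with periodic boundary conditions. -/
def lap (L : Fin 3 → ℕ) : Matrix (Torus L) (Torus L) ℝ :=
  Matrix.of fun x y =>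
    (∑ i : Fin 3, ((if y = x + unitVec L i then (1 : ℝ) else 0) +
        (if y = x - unitVec L i then (1 : ℝ) else 0))) - (if y = x then 6 else 0)

/-- Distance to `0` in `ℤ/n`, via the minimal representative. -/
def zdist {n : ℕ} (x : ZMod n) : ℕ := min x.val (n - x.val)

/-- Euclidean distance on the torus. -/
def tdist (L : Fin 3 → ℕ) (x y : Torus L) : ℝ :=
  Real.sqrt (∑ i : Fin 3, ((zdist (x i - y i) : ℝ)) ^ 2)

/-- The band covariance profile `J = (-W²Δ + 1)⁻¹`. -/
def Jmat (L : Fin 3 → ℕ) [∀ i, NeZero (L i)] (W : ℕ) : Matrix (Torus L) (Torus L) ℝ :=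
  (((W : ℝ) ^ 2) • (-lap L) + 1)⁻¹

def mr2 (E : ℝ) : ℝ := 2 * (1 - E ^ 2 / 4)
def mi2 (E : ℝ) : ℝ := E * Real.sqrt (1 - E ^ 2 / 4)
def mr (E : ℝ) : ℝ := Real.sqrt (mr2 E)

/-- `ℰ = E/2 - i√(1 - E²/4)`. -/
def calE (E : ℝ) : ℂ := ((E / 2 : ℝ) : ℂ) - (Real.sqrt (1 - E ^ 2 / 4) : ℝ) * Complex.I
/-- `ℰ̄ = E - ℰ = E/2 + i√(1 - E²/4)`, the complex conjugate of `ℰ`. -/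
def calEbar (E : ℝ) : ℂ := ((E / 2 : ℝ) : ℂ) + (Real.sqrt (1 - E ^ 2 / 4) : ℝ) * Complex.I

/-- `C = (-W²Δ + m_r²)⁻¹`. -/
def Cmat (L : Fin 3 → ℕ) [∀ i, NeZero (L i)] (W : ℕ) (E : ℝ) : Matrix (Torus L) (Torus L) ℝ :=
  (((W : ℝ) ^ 2) • (-lap L) + mr2 E • 1)⁻¹

/-- `B = (C⁻¹ + i m_i²·Id)⁻¹`. -/
def Bmat (L : Fin 3 → ℕ) [∀ i, NeZero (L i)] (W : ℕ) (E : ℝ) : Matrix (Torus L) (Torus L) ℂ :=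
  (((Cmat L W E)⁻¹).map Complex.ofReal + (mi2 E * Complex.I) • 1)⁻¹

/-- The energy window `𝓘 = {E : η ≤ |E| ≤ 1.8}`. -/
def specI (η : ℝ) : Set ℝ := {E : ℝ | η ≤ |E| ∧ |E| ≤ 1.8}

/-- Wigner semicircle density `(1/π)√(1 - E²/4)`. -/
def rhoSC (E : ℝ) : ℝ := Real.sqrt (1 - E ^ 2 / 4) / Real.pi

/-- Real quadratic form `aᵀ M a`. -/
def qf (L : Fin 3 → ℕ) [∀ i, NeZero (L i)] (M : Matrix (Torus L) (Torus L) ℝ)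
    (a : Torus L → ℝ) : ℝ := a ⬝ᵥ M.mulVec a

/-- Characteristic function of a measure on `ℝ^Λ`. -/
def charFun (L : Fin 3 → ℕ) [∀ i, NeZero (L i)] (μ : Measure (Torus L → ℝ))
    (t : Torus L → ℝ) : ℂ :=
  ∫ x, Complex.exp (Complex.I * ((∑ j, t j * x j : ℝ) : ℂ)) ∂μ

/-- `C_f = (C⁻¹ - f m_r²·Id)⁻¹`. -/
def Cf (L : Fin 3 → ℕ) [∀ i, NeZero (L i)] (W : ℕ) (E : ℝ) (f : ℝ) :
    Matrix (Torus L) (Torus L) ℝ :=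
  ((Cmat L W E)⁻¹ - (f * mr2 E) • 1)⁻¹

/-- `μ` is the centered Gaussian measure on `ℝ^Λ` with covariance matrix `M`. -/
def IsCenteredGaussianWithCov (L : Fin 3 → ℕ) [∀ i, NeZero (L i)]
    (μ : Measure (Torus L → ℝ)) (M : Matrix (Torus L) (Torus L) ℝ) : Prop :=
  IsProbabilityMeasure μ ∧
    ∀ t : Torus L → ℝ, charFun L μ t = Complex.exp (-(1 / 2 : ℂ) * ((qf L M t : ℝ) : ℂ))

open scoped ComplexConjugate

section Fourier

variable (L : Fin 3 → ℕ) [∀ i, NeZero (L i)]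

/-- The plane wave `x ↦ exp (2πi ∑ᵢ pᵢ xᵢ / Lᵢ)` of momentum `p` on the torus. -/
def planeWave (p x : Torus L) : ℂ := ∏ i, ZMod.stdAddChar (p i * x i)

/-- The discrete Fourier transform of a real field on the torus. -/
def torusFourier (φ : Torus L → ℝ) (p : Torus L) : ℂ := ∑ x, (φ x : ℂ) * planeWave L p x

/-- The Fourier symbol of the negative Laplacian. -/
def lapSymbol (p : Torus L) : ℝ := ∑ i, ‖(ZMod.stdAddChar (p i) : ℂ) - 1‖ ^ 2

variable {L}

lemma planeWave_add (p x y : Torus L) :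
    planeWave L p (x + y) = planeWave L p x * planeWave L p y := by
  simp [planeWave, mul_add, AddChar.map_add_eq_mul, Finset.prod_mul_distrib]

lemma planeWave_neg (p x : Torus L) : planeWave L p (-x) = conj (planeWave L p x) := by
  simp [planeWave, AddChar.map_neg_eq_conj]

lemma planeWave_sub (p x y : Torus L) :
    planeWave L p (x - y) = planeWave L p x * conj (planeWave L p y) := by
  rw [sub_eq_add_neg, planeWave_add, planeWave_neg]

lemma norm_planeWave (p x : Torus L) : ‖planeWave L p x‖ = 1 := by
  simp [planeWave, norm_prod]

lemma planeWave_zero_left (x : Torus L) : planeWave L 0 x = 1 := by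
  simp [planeWave]

lemma planeWave_unitVec (p : Torus L) (i : Fin 3) :
    planeWave L p (unitVec L i) = ZMod.stdAddChar (p i) := by
  rw [planeWave, Finset.prod_eq_single i]
  · simp [unitVec]
  · intro j _ hj
    simp [unitVec, hj]
  · simp

lemma sum_planeWave (x : Torus L) :
    ∑ p, planeWave L p x = if x = 0 then (Fintype.card (Torus L) : ℂ) else 0 := by
  have h : ∑ p, planeWave L p x = ∏ i, ∑ q : ZMod (L i), ZMod.stdAddChar (q * x i) := by
    rw [Finset.prod_univ_sum, Fintype.piFinset_univ]
    rfl
  rw [h]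
  simp_rw [AddChar.sum_mulShift _ (ZMod.isPrimitive_stdAddChar _)]
  split_ifs with hx
  · subst hx
    simp [Fintype.card_pi]
  · obtain ⟨i, hi⟩ := Function.ne_iff.1 hx
    exact Finset.prod_eq_zero (Finset.mem_univ i) (by rw [if_neg (by simpa using hi), Nat.cast_zero])

lemma parseval_torusFourier (φ ψ : Torus L → ℝ) :
    ∑ p, torusFourier L φ p * conj (torusFourier L ψ p) =
      (Fintype.card (Torus L) : ℂ) * ∑ x, (φ x : ℂ) * ψ x := by
  have h (p : Torus L) : torusFourier L φ p * conj (torusFourier L ψ p) =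
      ∑ x, ∑ y, (φ x : ℂ) * ψ y * planeWave L p (x - y) := by
    simp only [torusFourier, map_sum, map_mul, Complex.conj_ofReal, Finset.sum_mul_sum,
      planeWave_sub]
    exact Finset.sum_congr rfl fun x _ => Finset.sum_congr rfl fun y _ => by ring
  simp_rw [h]
  rw [Finset.sum_comm, Finset.mul_sum]
  refine Finset.sum_congr rfl fun x _ => ?_
  rw [Finset.sum_comm]
  simp_rw [← Finset.mul_sum, sum_planeWave, sub_eq_zero]
  simp
  ring

lemma torusFourier_comp_add (φ : Torus L → ℝ) (e p : Torus L) :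
    torusFourier L (fun x => φ (x + e)) p = conj (planeWave L p e) * torusFourier L φ p := by
  rw [torusFourier, torusFourier, Finset.mul_sum,
    ← Equiv.sum_comp (Equiv.addRight e) (fun x => conj (planeWave L p e) * (φ x * planeWave L p x))]
  refine Finset.sum_congr rfl fun x _ => ?_
  have h : conj (planeWave L p e) * planeWave L p e = 1 := by
    rw [Complex.conj_mul', norm_planeWave]
    simp
  rw [Equiv.coe_addRight, planeWave_add]
  linear_combination (-(φ (x + e) : ℂ) * planeWave L p x) * h

lemma neg_lap_mulVec (φ : Torus L → ℝ) (x : Torus L) :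
    ((-lap L) *ᵥ φ) x =
      ∑ i, (2 * φ x - φ (x + unitVec L i) - φ (x + -unitVec L i)) := by
  rw [Matrix.neg_mulVec, Pi.neg_apply]
  simp only [Matrix.mulVec, dotProduct, lap, Matrix.of_apply,
    sub_mul, Finset.sum_mul, add_mul, ite_mul, one_mul, zero_mul, Finset.sum_sub_distrib]
  rw [Finset.sum_comm]
  simp [Finset.sum_add_distrib, ← sub_eq_add_neg]
  ring

lemma torusFourier_neg_lap (φ : Torus L → ℝ) (p : Torus L) :
    torusFourier L ((-lap L) *ᵥ φ) p = lapSymbol L p * torusFourier L φ p := by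
  have h : torusFourier L ((-lap L) *ᵥ φ) p =
      ∑ i, (2 * torusFourier L φ p - torusFourier L (fun x => φ (x + unitVec L i)) p -
        torusFourier L (fun x => φ (x + -unitVec L i)) p) := by
    simp only [torusFourier, neg_lap_mulVec, Complex.ofReal_sum, Finset.sum_mul, Finset.mul_sum,
      ← Finset.sum_sub_distrib]
    rw [Finset.sum_comm]
    refine Finset.sum_congr rfl fun i _ => Finset.sum_congr rfl fun x _ => ?_
    push_cast
    ring
  rw [h, lapSymbol]
  push_cast
  rw [Finset.sum_mul]
  refine Finset.sum_congr rfl fun i _ => ?_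
  rw [torusFourier_comp_add, torusFourier_comp_add, planeWave_neg, planeWave_unitVec,
    Complex.conj_conj, ← Complex.conj_mul']
  have h1 : conj (ZMod.stdAddChar (p i) : ℂ) * ZMod.stdAddChar (p i) = 1 := by
    rw [Complex.conj_mul', AddChar.norm_apply]
    simp
  rw [map_sub, map_one]
  linear_combination (-torusFourier L φ p) * h1

/-- The matrix `-sΔ + m` is diagonal in Fourier space. -/
lemma torusFourier_massive (s m : ℝ) (φ : Torus L → ℝ) (p : Torus L) :
    torusFourier L ((s • (-lap L) + m • 1) *ᵥ φ) p =
      ((s * lapSymbol L p + m : ℝ) : ℂ) * torusFourier L φ p := by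
  have h : torusFourier L ((s • (-lap L) + m • 1) *ᵥ φ) p =
      s * torusFourier L ((-lap L) *ᵥ φ) p + m * torusFourier L φ p := by
    simp only [torusFourier, Finset.mul_sum, ← Finset.sum_add_distrib, Matrix.add_mulVec,
      Matrix.smul_mulVec, Matrix.one_mulVec, Pi.add_apply, Pi.smul_apply, smul_eq_mul]
    refine Finset.sum_congr rfl fun x _ => ?_
    push_cast
    ring
  rw [h, torusFourier_neg_lap]
  push_cast
  ring

lemma lapSymbol_nonneg (p : Torus L) : 0 ≤ lapSymbol L p :=
  Finset.sum_nonneg fun _ _ => sq_nonneg _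

lemma massive_symbol_pos {s m : ℝ} (hs : 0 ≤ s) (hm : 0 < m) (p : Torus L) :
    0 < s * lapSymbol L p + m :=
  add_pos_of_nonneg_of_pos (mul_nonneg hs (lapSymbol_nonneg p)) hm

lemma isUnit_massive {s m : ℝ} (hs : 0 ≤ s) (hm : 0 < m) :
    IsUnit (s • (-lap L) + m • (1 : Matrix (Torus L) (Torus L) ℝ)) := by
  rw [← Matrix.mulVec_injective_iff_isUnit]
  change Function.Injective (Matrix.mulVecLin _)
  rw [← LinearMap.ker_eq_bot, LinearMap.ker_eq_bot']
  intro φ hφ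
  rw [Matrix.mulVecLin_apply] at hφ
  have hF (p : Torus L) : torusFourier L φ p = 0 := by
    have h := torusFourier_massive s m φ p
    rw [hφ] at h
    have h0 : torusFourier L 0 p = 0 := by simp [torusFourier]
    rw [h0, eq_comm, mul_eq_zero] at h
    exact h.resolve_left (Complex.ofReal_ne_zero.2 (massive_symbol_pos hs hm p).ne')
  have h := parseval_torusFourier φ φ
  simp only [hF, zero_mul, Finset.sum_const_zero] at h
  rw [eq_comm, mul_eq_zero] at h
  have h2 := h.resolve_left (Nat.cast_ne_zero.2 Fintype.card_ne_zero)
  norm_cast at h2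
  rw [Finset.sum_eq_zero_iff_of_nonneg fun x _ => mul_self_nonneg _] at h2
  funext x
  simpa using h2 x

/-- The quadratic form of the massive Green's function in Fourier space. -/
lemma qf_massive_inv {s m : ℝ} (hs : 0 ≤ s) (hm : 0 < m) (u : Torus L → ℝ) :
    qf L (s • (-lap L) + m • 1)⁻¹ u =
      (Fintype.card (Torus L) : ℝ)⁻¹ *
        ∑ p, ‖torusFourier L u p‖ ^ 2 / (s * lapSymbol L p + m) := by
  set A : Matrix (Torus L) (Torus L) ℝ := s • (-lap L) + m • 1 with hA
  have hu : A *ᵥ (A⁻¹ *ᵥ u) = u := by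
    rw [Matrix.mulVec_mulVec, Matrix.mul_nonsing_inv _
      ((Matrix.isUnit_iff_isUnit_det _).1 (isUnit_massive hs hm)), Matrix.one_mulVec]
  have hF (p : Torus L) : torusFourier L u p * conj (torusFourier L (A⁻¹ *ᵥ u) p) =
      ((‖torusFourier L u p‖ ^ 2 / (s * lapSymbol L p + m) : ℝ) : ℂ) := by
    have h := torusFourier_massive s m (A⁻¹ *ᵥ u) p
    rw [← hA, hu] at h
    have hw : ((s * lapSymbol L p + m : ℝ) : ℂ) ≠ 0 :=
      Complex.ofReal_ne_zero.2 (massive_symbol_pos hs hm p).ne'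
    have hc := congrArg conj h
    rw [map_mul, Complex.conj_ofReal] at hc
    rw [Complex.ofReal_div, eq_div_iff hw, Complex.ofReal_pow, ← Complex.mul_conj', hc]
    ring
  have h := parseval_torusFourier u (A⁻¹ *ᵥ u)
  simp_rw [hF] at h
  rw [qf, dotProduct, eq_inv_mul_iff_mul_eq₀ (Nat.cast_ne_zero.2 Fintype.card_ne_zero)]
  exact_mod_cast h.symm

end Fourier

section GreenBound

lemma four_mul_zdist_le_norm {N : ℕ} [NeZero N] (q : ZMod N) :
    4 * (zdist q : ℝ) ≤ N * ‖(ZMod.stdAddChar q : ℂ) - 1‖ := by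
  have hN : (0 : ℝ) < N := Nat.cast_pos.2 (NeZero.pos N)
  have hv : (q.val : ℝ) ≤ N := Nat.cast_le.2 q.val_lt.le
  have hsub : ((N - q.val : ℕ) : ℝ) = N - q.val := Nat.cast_sub q.val_lt.le
  have key : 2 * (zdist q : ℝ) ≤ N * Real.sin (Real.pi * (q.val / N)) := by
    have jordan {y : ℝ} (h0 : 0 ≤ y) (h1 : 2 * y ≤ N) :
        2 * y ≤ N * Real.sin (Real.pi * (y / N)) := by
      have hy : y / N ≤ 1 / 2 := by rw [div_le_iff₀ hN]; linarith
      have h := Real.mul_le_sin (x := Real.pi * (y / N)) (by positivity)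
        (by nlinarith [Real.pi_pos])
      calc 2 * y = N * (2 / Real.pi * (Real.pi * (y / N))) := by
            field_simp
        _ ≤ _ := by gcongr
    rcases le_total (2 * (q.val : ℝ)) N with h | h
    · refine le_trans ?_ (jordan (Nat.cast_nonneg _) h)
      gcongr
      exact min_le_left _ _
    · have hr : Real.sin (Real.pi * (q.val / N)) = Real.sin (Real.pi * ((N - q.val) / N)) := by
        rw [← Real.sin_pi_sub]
        congr 1
        field_simp
      rw [hr]
      refine le_trans ?_ (jordan (sub_nonneg.2 hv) (by linarith))
      rw [← hsub]
      gcongr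
      exact min_le_right _ _
  have hnorm : ‖(ZMod.stdAddChar q : ℂ) - 1‖ = ‖2 * Real.sin (Real.pi * (q.val / N))‖ := by
    rw [ZMod.stdAddChar_apply, ZMod.toCircle_eq_circleExp, Circle.coe_exp, mul_comm,
      Complex.norm_exp_I_mul_ofReal_sub_one]
    congr 3
    ring
  have habs := le_abs_self (2 * Real.sin (Real.pi * (q.val / N)))
  rw [hnorm, Real.norm_eq_abs]
  nlinarith

/-- `(n + 1) ^ (-2/3)`, whose threefold product dominates the inverse square distance. -/
def invCbrtSq (n : ℕ) : ℝ := ((((n : ℝ) + 1) ^ (1 / 3 : ℝ)) ^ 2)⁻¹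

lemma cbrt_pow_three {x : ℝ} (hx : 0 ≤ x) : (x ^ (1 / 3 : ℝ)) ^ 3 = x := by
  rw [← Real.rpow_natCast, ← Real.rpow_mul hx]
  norm_num

lemma invCbrtSq_nonneg (n : ℕ) : 0 ≤ invCbrtSq n := by
  rw [invCbrtSq]
  positivity

lemma invCbrtSq_antitone : Antitone invCbrtSq := fun m n h => by
  have : (m : ℝ) ≤ n := Nat.cast_le.2 h
  unfold invCbrtSq
  gcongr

lemma sum_range_invCbrtSq_le (N : ℕ) :
    ∑ k ∈ Finset.range N, invCbrtSq k ≤ 3 * (N : ℝ) ^ (1 / 3 : ℝ) := by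
  induction N with
  | zero => simp
  | succ n ih =>
    rw [Finset.sum_range_succ, Nat.cast_succ]
    set u := ((n : ℝ) + 1) ^ (1 / 3 : ℝ) with hu
    set v := (n : ℝ) ^ (1 / 3 : ℝ) with hv
    have hu3 : u ^ 3 = n + 1 := cbrt_pow_three (by positivity)
    have hv3 : v ^ 3 = n := cbrt_pow_three (by positivity)
    have hu0 : 0 < u := by positivity
    have hv0 : 0 ≤ v := by positivity
    have hvu : v ≤ u := Real.rpow_le_rpow (by positivity) (by linarith) (by norm_num)
    have h : invCbrtSq n ≤ 3 * (u - v) := by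
      rw [invCbrtSq, ← hu, inv_le_iff_one_le_mul₀ (by positivity)]
      nlinarith [mul_nonneg (sub_nonneg.2 hvu) (sub_nonneg.2 hvu),
        mul_nonneg (sub_nonneg.2 hvu) hv0, mul_nonneg (sub_nonneg.2 hvu) hu0.le,
        mul_nonneg (mul_nonneg (sub_nonneg.2 hvu) (sub_nonneg.2 hvu)) hv0,
        mul_nonneg (mul_nonneg (sub_nonneg.2 hvu) (sub_nonneg.2 hvu)) hu0.le]
    linarith

lemma sum_zmod_val {N : ℕ} [NeZero N] (f : ℕ → ℝ) :
    ∑ q : ZMod N, f q.val = ∑ k ∈ Finset.range N, f k := by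
  obtain ⟨n, rfl⟩ := Nat.exists_eq_succ_of_ne_zero (NeZero.ne N)
  exact Fin.sum_univ_eq_sum_range f (n + 1)

lemma sum_invCbrtSq_zdist_le {N : ℕ} [NeZero N] :
    ∑ q : ZMod N, invCbrtSq (zdist q) ≤ 6 * (N : ℝ) ^ (1 / 3 : ℝ) := by
  have h (q : ZMod N) : invCbrtSq (zdist q) ≤ invCbrtSq q.val + invCbrtSq (N - 1 - q.val) := by
    rcases min_choice q.val (N - q.val) with hm | hm
    · rw [zdist, hm]
      exact le_add_of_nonneg_right (invCbrtSq_nonneg _)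
    · rw [zdist, hm]
      exact le_add_of_nonneg_of_le (invCbrtSq_nonneg _) (invCbrtSq_antitone (by omega))
  refine (Finset.sum_le_sum fun q _ => h q).trans ?_
  rw [Finset.sum_add_distrib, sum_zmod_val, sum_zmod_val fun k => invCbrtSq (N - 1 - k),
    Finset.sum_range_reflect]
  linarith [sum_range_invCbrtSq_le N]

variable {N : ℕ} [NeZero N]

lemma inv_lapSymbol_le {p : Torus fun _ => N} (hp : p ≠ 0) :
    ((N : ℝ) ^ 2 * lapSymbol (fun _ => N) p)⁻¹ ≤ 1 / 4 * ∏ i, invCbrtSq (zdist (p i)) := by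
  set S : ℝ := ∑ i, (zdist (p i) : ℝ) ^ 2 with hS
  have hd (i : Fin 3) : (zdist (p i) : ℝ) ^ 2 ≤ S :=
    Finset.single_le_sum (f := fun i => (zdist (p i) : ℝ) ^ 2) (fun _ _ => sq_nonneg _)
      (Finset.mem_univ i)
  have hS1 : 1 ≤ S := by
    obtain ⟨i, hi⟩ := Function.ne_iff.1 hp
    have h1 : 1 ≤ zdist (p i) :=
      le_min (Nat.pos_of_ne_zero ((ZMod.val_ne_zero _).2 hi)) (Nat.sub_pos_of_lt (p i).val_lt)
    have h2 : (1 : ℝ) ≤ zdist (p i) := by exact_mod_cast h1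
    nlinarith [hd i]
  have hlam : 16 * S ≤ (N : ℝ) ^ 2 * lapSymbol (fun _ => N) p := by
    rw [lapSymbol, hS, Finset.mul_sum, Finset.mul_sum]
    refine Finset.sum_le_sum fun i _ => ?_
    have h := pow_le_pow_left₀ (by positivity) (four_mul_zdist_le_norm (p i)) 2
    linarith [mul_pow (4 : ℝ) (zdist (p i) : ℝ) 2,
      mul_pow (N : ℝ) ‖(ZMod.stdAddChar (p i) : ℂ) - 1‖ 2]
  set P : ℝ := ∏ i, (((zdist (p i) : ℝ) + 1) ^ (1 / 3 : ℝ)) ^ 2 with hP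
  have hP0 : 0 < P := Finset.prod_pos fun i _ => by positivity
  have hPS : P ≤ 4 * S := by
    refine le_of_pow_le_pow_left₀ three_ne_zero (by linarith) ?_
    rw [hP, ← Finset.prod_pow]
    calc _ ≤ ∏ _i : Fin 3, 4 * S := by
          refine Finset.prod_le_prod (fun i _ => by positivity) fun i _ => ?_
          rw [pow_right_comm, cbrt_pow_three (by positivity)]
          nlinarith [hd i, sq_nonneg ((zdist (p i) : ℝ) - 1)]
      _ = (4 * S) ^ 3 := by simp
  simp only [invCbrtSq, Finset.prod_inv_distrib, ← hP]
  calc _ ≤ (4 * P)⁻¹ := inv_anti₀ (by positivity) (by linarith)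
    _ = 1 / 4 * P⁻¹ := by rw [mul_inv, one_div]

lemma sum_prod_invCbrtSq_le :
    ∑ p : Torus fun _ => N, ∏ i, invCbrtSq (zdist (p i)) ≤ 216 * N := by
  have h : ∑ p : Torus fun _ => N, ∏ i, invCbrtSq (zdist (p i)) =
      ∏ _i : Fin 3, ∑ q : ZMod N, invCbrtSq (zdist q) := by
    rw [Finset.prod_univ_sum, Fintype.piFinset_univ]
  rw [h, Finset.prod_const, Finset.card_univ, Fintype.card_fin]
  calc _ ≤ (6 * (N : ℝ) ^ (1 / 3 : ℝ)) ^ 3 :=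
        pow_le_pow_left₀ (Finset.sum_nonneg fun _ _ => invCbrtSq_nonneg _)
          sum_invCbrtSq_zdist_le 3
    _ = 216 * N := by
        rw [mul_pow, cbrt_pow_three (by positivity)]
        norm_num

/-- Bound on the massive Green's function, with the zero mode separated. -/
lemma qf_massive_inv_le {m B : ℝ} (hm : 0 < m) (u : Torus (fun _ => N) → ℝ)
    (hB : ∀ p, ‖torusFourier (fun _ => N) u p‖ ^ 2 ≤ B) :
    qf (fun _ => N) ((N : ℝ) ^ 2 • (-lap fun _ => N) + m • 1)⁻¹ u ≤
      ((N : ℝ) ^ 3)⁻¹ * ((∑ x, u x) ^ 2 / m + 54 * N * B) := by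
  have hcard : (Fintype.card (Torus fun _ => N) : ℝ) = (N : ℝ) ^ 3 := by
    simp [Fintype.card_pi, ZMod.card]
  have hB0 : 0 ≤ B := (sq_nonneg _).trans (hB 0)
  have hN : (0 : ℝ) < N := Nat.cast_pos.2 (NeZero.pos N)
  rw [qf_massive_inv (sq_nonneg _) hm, hcard]
  gcongr
  rw [← Finset.add_sum_erase _ _ (Finset.mem_univ 0)]
  refine add_le_add (le_of_eq ?_) ?_
  · have h0 : lapSymbol (fun _ => N) 0 = 0 := by simp [lapSymbol]
    have hF : torusFourier (fun _ => N) u 0 = ((∑ x, u x : ℝ) : ℂ) := by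
      simp [torusFourier, planeWave_zero_left]
    rw [h0, hF, Complex.norm_real, Real.norm_eq_abs, sq_abs, mul_zero, zero_add]
  · have hterm : ∀ p ∈ Finset.univ.erase (0 : Torus fun _ => N),
        ‖torusFourier (fun _ => N) u p‖ ^ 2 / ((N : ℝ) ^ 2 * lapSymbol (fun _ => N) p + m) ≤
          B / 4 * ∏ i, invCbrtSq (zdist (p i)) := by
      intro p hp
      have hp0 := Finset.ne_of_mem_erase hp
      have hinv := inv_lapSymbol_le hp0
      have hpos : 0 < (N : ℝ) ^ 2 * lapSymbol (fun _ => N) p := by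
        refine mul_pos (by positivity) ((lapSymbol_nonneg p).lt_of_ne' fun h => hp0 ?_)
        funext i
        have hi := (Finset.sum_eq_zero_iff_of_nonneg fun _ _ => sq_nonneg _).1 h i
          (Finset.mem_univ i)
        have h1 : (ZMod.stdAddChar (p i) : ℂ) = ZMod.stdAddChar (0 : ZMod N) := by
          rw [AddChar.map_zero_eq_one]
          exact sub_eq_zero.1 (norm_eq_zero.1 (pow_eq_zero_iff two_ne_zero |>.1 hi))
        exact ZMod.injective_stdAddChar h1
      calc _ ≤ B / ((N : ℝ) ^ 2 * lapSymbol (fun _ => N) p) :=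
            div_le_div₀ hB0 (hB p) hpos (by linarith)
        _ ≤ B * (1 / 4 * ∏ i, invCbrtSq (zdist (p i))) := by
            rw [div_eq_mul_inv]
            gcongr
        _ = _ := by ring
    refine (Finset.sum_le_sum hterm).trans ?_
    rw [← Finset.mul_sum]
    have hsub : ∑ p ∈ Finset.univ.erase (0 : Torus fun _ => N), ∏ i, invCbrtSq (zdist (p i)) ≤
        216 * N :=
      (Finset.sum_le_sum_of_subset_of_nonneg (Finset.erase_subset _ _) fun p _ _ =>
        Finset.prod_nonneg fun i _ => invCbrtSq_nonneg _).trans sum_prod_invCbrtSq_le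
    calc _ ≤ B / 4 * (216 * N) := by gcongr
      _ = _ := by ring

end GreenBound

section GaussianTail

variable {L : Fin 3 → ℕ} [∀ i, NeZero (L i)] {μ : Measure (Torus L → ℝ)}
  {M : Matrix (Torus L) (Torus L) ℝ}

lemma IsCenteredGaussianWithCov.map_dotProduct (hμ : IsCenteredGaussianWithCov L μ M)
    (t : Torus L → ℝ) (h0 : 0 ≤ qf L M t) :
    μ.map (fun x => t ⬝ᵥ x) = ProbabilityTheory.gaussianReal 0 (qf L M t).toNNReal := by
  have := hμ.1
  have hmeas : Measurable fun x : Torus L → ℝ => t ⬝ᵥ x := by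
    unfold dotProduct
    fun_prop
  refine Measure.ext_of_charFun (funext fun s => ?_)
  rw [ProbabilityTheory.charFun_gaussianReal, MeasureTheory.charFun_apply_real,
    integral_map hmeas.aemeasurable (by fun_prop)]
  have h := hμ.2 (s • t)
  have hq : qf L M (s • t) = s ^ 2 * qf L M t := by
    simp only [qf, Matrix.mulVec_smul, smul_dotProduct, dotProduct_smul, smul_eq_mul]
    ring
  rw [hq] at h
  rw [Real.coe_toNNReal _ h0]
  calc _ = _root_.charFun L μ (s • t) := by
        refine integral_congr_ae (ae_of_all _ fun x => ?_)
        have hx : ∑ j, (s • t) j * x j = s * (t ⬝ᵥ x) := by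
          rw [dotProduct, Finset.mul_sum]
          exact Finset.sum_congr rfl fun j _ => by rw [Pi.smul_apply, smul_eq_mul, mul_assoc]
        beta_reduce
        rw [hx]
        push_cast
        ring_nf
    _ = _ := by
        rw [h]
        push_cast
        ring_nf

lemma IsCenteredGaussianWithCov.measure_dotProduct_ge_le (hμ : IsCenteredGaussianWithCov L μ M)
    (t : Torus L → ℝ) (h0 : 0 ≤ qf L M t) {V ε : ℝ} (hV : 0 < V) (hqV : qf L M t ≤ V)
    (hε : 0 ≤ ε) :
    μ {x | ε ≤ t ⬝ᵥ x} ≤ ENNReal.ofReal (Real.exp (-(ε ^ 2 / (2 * V)))) := by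
  have := hμ.1
  have hmap := hμ.map_dotProduct t h0
  have hmgf := ProbabilityTheory.mgf_gaussianReal hmap (ε / V)
  have hint : Integrable (fun x => Real.exp (ε / V * (t ⬝ᵥ x))) μ := by
    rw [← ProbabilityTheory.mgf_pos_iff, hmgf]
    exact Real.exp_pos _
  have h := ProbabilityTheory.measure_ge_le_exp_mul_mgf ε (by positivity) hint
  rw [hmgf, ← Real.exp_add] at h
  rw [← ofReal_measureReal]
  refine ENNReal.ofReal_le_ofReal (h.trans (Real.exp_le_exp.2 ?_))
  rw [Real.coe_toNNReal _ h0]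
  calc _ ≤ -(ε / V) * ε + (0 * (ε / V) + V * (ε / V) ^ 2 / 2) := by gcongr
    _ = _ := by
        field_simp
        ring

lemma IsCenteredGaussianWithCov.measure_abs_dotProduct_gt_le
    (hμ : IsCenteredGaussianWithCov L μ M)
    (t : Torus L → ℝ) (h0 : 0 ≤ qf L M t) {V ε : ℝ} (hV : 0 < V) (hqV : qf L M t ≤ V)
    (hε : 0 ≤ ε) :
    μ {x | ε < |t ⬝ᵥ x|} ≤ ENNReal.ofReal (2 * Real.exp (-(ε ^ 2 / (2 * V)))) := by
  have hneg : qf L M (-t) = qf L M t := by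
    simp [qf, Matrix.mulVec_neg]
  have hsub : {x | ε < |t ⬝ᵥ x|} ⊆ {x | ε ≤ t ⬝ᵥ x} ∪ {x | ε ≤ (-t) ⬝ᵥ x} := by
    intro x hx
    rcases lt_abs.1 (Set.mem_ofPred.1 hx) with h | h
    · exact Or.inl h.le
    · exact Or.inr (by simpa using h.le)
  refine (measure_mono hsub).trans ((measure_union_le _ _).trans ?_)
  rw [two_mul, ENNReal.ofReal_add (Real.exp_pos _).le (Real.exp_pos _).le]
  exact add_le_add (hμ.measure_dotProduct_ge_le t h0 hV hqV hε)
    (hμ.measure_dotProduct_ge_le (-t) (hneg ▸ h0) hV (hneg ▸ hqV) hε)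

/-- Union bound over a finite family of linear functionals. -/
lemma IsCenteredGaussianWithCov.measure_exists_abs_dotProduct_gt_le {ι : Type*} [Fintype ι]
    (hμ : IsCenteredGaussianWithCov L μ M)
    (t : ι → Torus L → ℝ) (h0 : ∀ k, 0 ≤ qf L M (t k)) {V ε : ℝ} (hV : 0 < V)
    (hqV : ∀ k, qf L M (t k) ≤ V) (hε : 0 ≤ ε) :
    μ {x | ∃ k, ε < |t k ⬝ᵥ x|} ≤
      ENNReal.ofReal (2 * Fintype.card ι * Real.exp (-(ε ^ 2 / (2 * V)))) := by
  have hset : {x | ∃ k, ε < |t k ⬝ᵥ x|} = ⋃ k, {x | ε < |t k ⬝ᵥ x|} := by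
    ext x
    simp
  rw [hset]
  refine (measure_iUnion_fintype_le μ _).trans ((Finset.sum_le_sum fun k _ =>
    hμ.measure_abs_dotProduct_gt_le (t k) (h0 k) hV (hqV k) hε).trans (le_of_eq ?_))
  rw [← ENNReal.ofReal_sum_of_nonneg fun _ _ => by positivity, Finset.sum_const, Finset.card_univ,
    nsmul_eq_mul]
  ring_nf

end GaussianTail

section LargeField

lemma qf_massive_inv_nonneg {L : Fin 3 → ℕ} [∀ i, NeZero (L i)] {s m : ℝ} (hs : 0 ≤ s)
    (hm : 0 < m) (u : Torus L → ℝ) : 0 ≤ qf L (s • (-lap L) + m • 1)⁻¹ u := by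
  rw [qf_massive_inv hs hm]
  exact mul_nonneg (by positivity) (Finset.sum_nonneg fun p _ =>
    div_nonneg (sq_nonneg _) (massive_symbol_pos hs hm p).le)

lemma Cf_eq_massive_inv {L : Fin 3 → ℕ} [∀ i, NeZero (L i)] (W : ℕ) {E : ℝ} (f : ℝ)
    (hE : 0 < mr2 E) :
    Cf L W E f = ((W : ℝ) ^ 2 • (-lap L) + ((1 - f) * mr2 E) • 1)⁻¹ := by
  rw [Cf, Cmat, Matrix.nonsing_inv_nonsing_inv _
    ((Matrix.isUnit_iff_isUnit_det _).1 (isUnit_massive (sq_nonneg _) hE)), add_sub_assoc,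
    ← sub_smul, sub_mul, one_mul]

lemma le_mr2_of_mem_specI {η E : ℝ} (hE : E ∈ specI η) : 0.38 ≤ mr2 E := by
  have h := sq_le_sq₀ (abs_nonneg E) (by norm_num) |>.2 hE.2
  rw [sq_abs] at h
  rw [mr2]
  linarith

variable {L : Fin 3 → ℕ} [∀ i, NeZero (L i)]

lemma torusFourier_single (j p : Torus L) :
    torusFourier L (Pi.single j 1) p = planeWave L p j := by
  simp [torusFourier, Pi.single_apply, apply_ite Complex.ofReal, ite_mul]

lemma torusFourier_sub (u v : Torus L → ℝ) (p : Torus L) :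
    torusFourier L (u - v) p = torusFourier L u p - torusFourier L v p := by
  simp [torusFourier, sub_mul]

variable {N : ℕ} [NeZero N]

lemma qf_massive_inv_single_le {m : ℝ} (hm : 0.095 ≤ m) (j : Torus fun _ => N) :
    qf (fun _ => N) ((N : ℝ) ^ 2 • (-lap fun _ => N) + m • 1)⁻¹ (Pi.single j 1) ≤
      216 / (N : ℝ) ^ 2 := by
  have hN : (1 : ℝ) ≤ N := Nat.one_le_cast.2 (NeZero.one_le)
  refine (qf_massive_inv_le (B := 1) (by linarith) _ fun p => ?_).trans ?_
  · rw [torusFourier_single, norm_planeWave, one_pow]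
  · have hsum : ∑ x, (Pi.single j 1 : Torus (fun _ => N) → ℝ) x = 1 := by simp
    have hinv : 1 / m ≤ 11 := by
      rw [div_le_iff₀ (by linarith)]
      linarith
    rw [hsum, one_pow, inv_mul_eq_div, div_le_div_iff₀ (by positivity) (by positivity)]
    have h : 1 / m + 54 * N * 1 ≤ 216 * N := by linarith
    calc _ ≤ 216 * N * (N : ℝ) ^ 2 := by gcongr
      _ = _ := by ring

lemma qf_massive_inv_sub_single_le {m : ℝ} (hm : 0 < m) (j k : Torus fun _ => N) :
    qf (fun _ => N) ((N : ℝ) ^ 2 • (-lap fun _ => N) + m • 1)⁻¹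
      (Pi.single j 1 - Pi.single k 1) ≤ 216 / (N : ℝ) ^ 2 := by
  have hN : (0 : ℝ) < N := Nat.cast_pos.2 (NeZero.pos N)
  refine (qf_massive_inv_le (B := 4) hm _ fun p => ?_).trans (le_of_eq ?_)
  · rw [torusFourier_sub, torusFourier_single, torusFourier_single]
    have h := norm_sub_le (planeWave (fun _ => N) p j) (planeWave (fun _ => N) p k)
    rw [norm_planeWave, norm_planeWave] at h
    nlinarith [norm_nonneg (planeWave (fun _ => N) p j - planeWave (fun _ => N) p k)]
  · have hsum : ∑ x, (Pi.single j 1 - Pi.single k 1 : Torus (fun _ => N) → ℝ) x = 0 := by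
      simp [Finset.sum_sub_distrib]
    rw [hsum]
    field_simp
    ring

lemma threshold_sq_div {W : ℝ} (hW : 0 < W) :
    (W ^ (-(1 / 8 : ℝ))) ^ 2 / (2 * (216 / W ^ 2)) = 1 / 432 * W ^ ((7 : ℝ) / 4) := by
  have h : (W ^ (-(1 / 8 : ℝ))) ^ 2 * W ^ 2 = W ^ ((7 : ℝ) / 4) := by
    rw [← Real.rpow_natCast, ← Real.rpow_mul hW.le, ← Real.rpow_natCast W, ← Real.rpow_add hW]
    norm_num
  rw [← h]
  field_simp
  norm_num

end LargeField

/-- Large-field probability estimates for the Gaussian measures with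
covariances `C_{f_a}` (with `0 < f_a ≤ 3/4`) and `C_{f_b}` (with `f_b = 1 - W⁻³`). -/
theorem large_field_probability (η : ℝ) (hη : 0 < η) :
    ∃ (W₀ : ℕ) (K c : ℝ), 0 < K ∧ 0 < c ∧
      ∀ (W : ℕ), W₀ ≤ W →
      ∀ (L : Fin 3 → ℕ) [∀ i, NeZero (L i)], (∀ i, L i = W) →
      ∀ E ∈ specI η,
        (∀ fa : ℝ, 0 < fa → fa ≤ 3 / 4 →
          ∀ μ : Measure (Torus L → ℝ),
            IsCenteredGaussianWithCov L μ (Cf L W E fa) →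
            μ {a : Torus L → ℝ | ∃ j, (W : ℝ) ^ (-(1 / 8 : ℝ)) < |a j|}
              ≤ ENNReal.ofReal
                  (K * (W : ℝ) ^ 3 * Real.exp (-c * (W : ℝ) ^ ((7 : ℝ) / 4)))) ∧
        (∀ μ : Measure (Torus L → ℝ),
            IsCenteredGaussianWithCov L μ (Cf L W E (1 - ((W : ℝ) ^ 3)⁻¹)) →
            μ {b : Torus L → ℝ | ∃ j j', (W : ℝ) ^ (-(1 / 8 : ℝ)) < |b j - b j'|}
              ≤ ENNReal.ofReal
                  (K * (W : ℝ) ^ 6 * Real.exp (-c * (W : ℝ) ^ ((7 : ℝ) / 4)))) := by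
  refine ⟨0, 2, 1 / 432, by norm_num, by norm_num, fun W _ L _ hL E hE => ?_⟩
  obtain rfl : L = fun _ => W := funext hL
  have : NeZero W := ‹∀ i : Fin 3, NeZero W› 0
  have hW : (0 : ℝ) < W := Nat.cast_pos.2 (NeZero.pos W)
  have hmr := le_mr2_of_mem_specI hE
  have hmr0 : 0 < mr2 E := by linarith
  have hV : 0 < 216 / (W : ℝ) ^ 2 := by positivity
  have hε : 0 ≤ (W : ℝ) ^ (-(1 / 8 : ℝ)) := by positivity
  have hcard : (Fintype.card (Torus fun _ => W) : ℝ) = (W : ℝ) ^ 3 := by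
    simp [Fintype.card_pi, ZMod.card]
  refine ⟨fun fa _ hfa μ hμ => ?_, fun μ hμ => ?_⟩
  · rw [Cf_eq_massive_inv W fa hmr0] at hμ
    have hm : 0.095 ≤ (1 - fa) * mr2 E := by nlinarith
    have h := hμ.measure_exists_abs_dotProduct_gt_le (fun j => Pi.single j 1)
      (fun j => qf_massive_inv_nonneg (sq_nonneg _) (by linarith) _) hV
      (qf_massive_inv_single_le hm) hε
    simp only [single_dotProduct, one_mul] at h
    rwa [threshold_sq_div hW, hcard, ← neg_mul] at h
  · rw [Cf_eq_massive_inv W _ hmr0, sub_sub_cancel] at hμ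
    have hm : 0 < ((W : ℝ) ^ 3)⁻¹ * mr2 E := by positivity
    have h := hμ.measure_exists_abs_dotProduct_gt_le
      (fun k : (Torus fun _ => W) × (Torus fun _ => W) => Pi.single k.1 1 - Pi.single k.2 1)
      (fun k => qf_massive_inv_nonneg (sq_nonneg _) hm _) hV
      (fun k => qf_massive_inv_sub_single_le hm k.1 k.2) hε
    simp only [sub_dotProduct, single_dotProduct, one_mul, Prod.exists] at h
    rwa [threshold_sq_div hW, Fintype.card_prod, Nat.cast_mul, hcard, ← neg_mul, ← pow_add] at h
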